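/- For all integers m ≥ 0 and l ∈ ℤ, one has S̃_{m+1,l}(q) = q^{−l} S_{m,l+1}(q) + S_{m,l}(q) + q^{−m+l−1} S̃_{m,l−1}(q), an identity in ℤ[q, q⁻¹]. -/

import Mathlib

/-!
The recursion holds because of the dual q-Pascal rule
`C(n+1,k) = C(n,k) + q^(n+1-k) C(n,k-1)`, applied twice to the summands of `S̃_{m+1,l}`.

Applied to `C(m+1,ν)`, it splits the `ν`-th summand in two. The part with `C(m,ν)` is the `ν`-th
summand of `q^(-m+l-1) S̃_{m,l-1}`. In the part with `C(m,ν-1)` put `μ = ν - 1` and apply the rule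
to `C(μ+1, m-l-μ)`: the result is the sum of the `μ`-th summands of `S_{m,l}` and
`q^(-l) S_{m,l+1}`. Summing over `ν` and shifting the index in the second part gives the claim.
The dual rule (`qbinom_dual`, `qbinomZ_dual`) follows from the defining one by induction on `n`.
-/

open LaurentPolynomial

/-- The Gaussian (q-)binomial coefficient `C(n,k)_q` as a Laurent polynomial in `q`,
defined by the q-Pascal recursion `C(n+1,k+1)_q = C(n,k)_q + q^(k+1) C(n,k+1)_q`. -/
noncomputable def qbinom : ℕ → ℕ → LaurentPolynomial ℤ
  | _, 0 => 1
  | 0, _ + 1 => 0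
  | n + 1, k + 1 => qbinom n k + T ((k : ℤ) + 1) * qbinom n (k + 1)

/-- `C(n,k)_q` for integer arguments, zero unless `0 ≤ k ≤ n`. -/
noncomputable def qbinomZ (n k : ℤ) : LaurentPolynomial ℤ :=
  if 0 ≤ k ∧ k ≤ n then qbinom n.toNat k.toNat else 0

/-- `S_{m,l}(q) = Σ_{ν∈ℤ} q^{(ν+l−m)(ν+l)+ν(ν−m)} C(m,ν)_q C(ν, m−l−ν)_q`. -/
noncomputable def Sq (m : ℕ) (l : ℤ) : LaurentPolynomial ℤ :=
  ∑ᶠ ν : ℤ,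
    T ((ν + l - m) * (ν + l) + ν * (ν - m)) * (qbinomZ m ν * qbinomZ ν (m - l - ν))

/-- `S̃_{m,l}(q) = Σ_{ν∈ℤ} q^{(ν+l−m)(ν+l−1)+ν(ν−m)} C(m,ν)_q C(ν, m−l−ν)_q`. -/
noncomputable def Sqt (m : ℕ) (l : ℤ) : LaurentPolynomial ℤ :=
  ∑ᶠ ν : ℤ,
    T ((ν + l - m) * (ν + l - 1) + ν * (ν - m)) * (qbinomZ m ν * qbinomZ ν (m - l - ν))

theorem qbinom_eq_zero_of_lt : ∀ (n k : ℕ), n < k → qbinom n k = 0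
  | 0, k + 1, _ => by simp [qbinom]
  | n + 1, k + 1, h => by
    rw [qbinom, qbinom_eq_zero_of_lt n k (by omega), qbinom_eq_zero_of_lt n (k + 1) (by omega)]
    simp

theorem qbinom_dual (n : ℕ) : ∀ k : ℕ,
    qbinom (n + 1) (k + 1) = qbinom n (k + 1) + T ((n : ℤ) - k) * qbinom n k := by
  induction n with
  | zero =>
    intro k
    cases k <;> simp [qbinom]
  | succ n ih =>
    intro k
    cases k with
    | zero =>
      have h1 := ih 0
      have h2 : qbinom (n + 1) 1 = 1 + T 1 * qbinom n 1 := by simp [qbinom]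
      have h3 : qbinom (n + 2) 1 = 1 + T 1 * qbinom (n + 1) 1 := by simp [qbinom]
      have h4 : qbinom n 0 = 1 := by simp [qbinom]
      have h5 : qbinom (n + 1) 0 = 1 := by simp [qbinom]
      have h6 : (T ((n : ℤ) + 1) : LaurentPolynomial ℤ) = T n * T 1 := T_add _ _
      simp only [zero_add, Nat.cast_zero, sub_zero, Nat.cast_add, Nat.cast_one] at *
      rw [h3, h5, h6]
      linear_combination T 1 * h1 - h2 + T 1 * T n * h4
    | succ j =>
      have d (a b : ℕ) :
          qbinom (a + 1) (b + 1) = qbinom a b + T ((b : ℤ) + 1) * qbinom a (b + 1) := by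
        rw [qbinom]
      have e : (T ((j : ℤ) + 1 + 1) * T ((n : ℤ) - (j + 1)) : LaurentPolynomial ℤ)
          = T ((n : ℤ) - j) * T ((j : ℤ) + 1) := by
        rw [← T_add, ← T_add]; congr 1; ring
      have h1 := ih j
      have h2 := ih (j + 1)
      have h3 := d (n + 1) (j + 1)
      have h4 := d n (j + 1)
      have h5 := d n j
      have e2 : ((n + 1 : ℕ) : ℤ) - ((j + 1 : ℕ) : ℤ) = n - j := by push_cast; ring
      rw [e2]
      push_cast at *
      linear_combination h3 + h1 + T ((j : ℤ) + 1 + 1) * h2 - h4 - T ((n : ℤ) - j) * h5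
        + qbinom n (j + 1) * e

theorem qbinomZ_of_nonneg (n k : ℕ) : qbinomZ n k = qbinom n k := by
  unfold qbinomZ
  split_ifs with h
  · simp
  · rw [qbinom_eq_zero_of_lt]
    omega

theorem qbinomZ_of_neg (n k : ℤ) (h : k < 0) : qbinomZ n k = 0 :=
  if_neg (by omega)

/-- For `n = -1` the rule fails at `k = 0`, hence the hypothesis on `n`. -/
theorem qbinomZ_dual (n k : ℤ) (hn : 0 ≤ n) :
    qbinomZ (n + 1) k = qbinomZ n k + T (n + 1 - k) * qbinomZ n (k - 1) := by
  lift n to ℕ using hn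
  rcases lt_or_ge k 0 with hk | hk
  · simp [qbinomZ_of_neg _ _ hk, qbinomZ_of_neg _ (k - 1) (by omega)]
  · lift k to ℕ using hk
    cases k with
    | zero =>
      have h := qbinomZ_of_nonneg (n + 1) 0
      have h' := qbinomZ_of_nonneg n 0
      push_cast at h h'
      simp [h, h', qbinomZ_of_neg, qbinom]
    | succ k =>
      have e : ((k + 1 : ℕ) : ℤ) - 1 = k := by push_cast; ring
      have e2 : (n : ℤ) + 1 - (k + 1 : ℕ) = n - k := by push_cast; ring
      have h := qbinomZ_of_nonneg (n + 1) (k + 1)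
      rw [Nat.cast_add n 1, Nat.cast_one] at h
      rw [h, e, e2, qbinomZ_of_nonneg, qbinomZ_of_nonneg, qbinom_dual]

theorem finite_support_summand (m : ℕ) (f g : ℤ → LaurentPolynomial ℤ) :
    (Function.support fun ν : ℤ => f ν * (qbinomZ m ν * g ν)).Finite := by
  refine (Set.finite_Icc (0 : ℤ) m).subset fun ν hν => ?_
  by_contra h
  exact hν (by simp [qbinomZ, show ¬(0 ≤ ν ∧ ν ≤ (m : ℤ)) from h])

/-- The second application of the dual rule: the part of the `(μ+1)`-st summand of `S̃_{m+1,l}`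
that carries `C(m,μ)`. -/
theorem summand_shifted (m : ℕ) (l μ : ℤ) :
    T ((μ + l - m) * (μ + l) + μ * (μ - m)) * (qbinomZ m μ * qbinomZ (μ + 1) (m - l - μ)) =
      T (-l) * (T ((μ + (l + 1) - m) * (μ + (l + 1)) + μ * (μ - m)) *
          (qbinomZ m μ * qbinomZ μ (m - (l + 1) - μ))) +
        T ((μ + l - m) * (μ + l) + μ * (μ - m)) * (qbinomZ m μ * qbinomZ μ (m - l - μ)) := by
  rcases lt_or_ge μ 0 with hμ | hμ
  · simp [qbinomZ_of_neg _ _ hμ]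
  · rw [qbinomZ_dual μ _ hμ, show (m : ℤ) - (l + 1) - μ = m - l - μ - 1 by ring]
    have e : (T (-l) * T ((μ + (l + 1) - m) * (μ + (l + 1)) + μ * (μ - m)) : LaurentPolynomial ℤ)
        = T ((μ + l - m) * (μ + l) + μ * (μ - m)) * T (μ + 1 - (m - l - μ)) := by
      rw [← T_add, ← T_add]; congr 1; ring
    linear_combination -(qbinomZ m μ * qbinomZ μ (m - l - μ - 1)) * e

/-- The first application of the dual rule, to `C(m+1,ν)`. -/
theorem summand_split (m : ℕ) (l ν : ℤ) :
    T ((ν + l - (m + 1 : ℕ)) * (ν + l - 1) + ν * (ν - (m + 1 : ℕ))) *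
        (qbinomZ (m + 1 : ℕ) ν * qbinomZ ν ((m + 1 : ℕ) - l - ν)) =
      T (-(m : ℤ) + l - 1) * (T ((ν + (l - 1) - m) * (ν + (l - 1) - 1) + ν * (ν - m)) *
          (qbinomZ m ν * qbinomZ ν (m - (l - 1) - ν))) +
        T ((ν - 1 + l - m) * (ν - 1 + l) + (ν - 1) * (ν - 1 - m)) *
          (qbinomZ m (ν - 1) * qbinomZ (ν - 1 + 1) (m - l - (ν - 1))) := by
  rw [Nat.cast_add, Nat.cast_one, qbinomZ_dual m ν (by positivity), sub_add_cancel,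
    show (m : ℤ) - (l - 1) - ν = m + 1 - l - ν by ring,
    show (m : ℤ) - l - (ν - 1) = m + 1 - l - ν by ring]
  have e1 : (T (-(m : ℤ) + l - 1) * T ((ν + (l - 1) - m) * (ν + (l - 1) - 1) + ν * (ν - m)) :
      LaurentPolynomial ℤ) = T ((ν + l - (m + 1)) * (ν + l - 1) + ν * (ν - (m + 1))) := by
    rw [← T_add]; congr 1; ring
  have e2 : (T ((ν - 1 + l - m) * (ν - 1 + l) + (ν - 1) * (ν - 1 - m)) : LaurentPolynomial ℤ) =
      T ((ν + l - (m + 1)) * (ν + l - 1) + ν * (ν - (m + 1))) * T (m + 1 - ν) := by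
    rw [← T_add]; congr 1; ring
  linear_combination -(qbinomZ m ν * qbinomZ ν (m + 1 - l - ν)) * e1
    - (qbinomZ m (ν - 1) * qbinomZ ν (m + 1 - l - ν)) * e2

/-- St_{m+1,l} = q^{-l} S_{m,l+1} + S_{m,l} + q^{-m+l-1} St_{m,l-1}. -/
theorem St_succ_rec1 (m : ℕ) (l : ℤ) :
    Sqt (m + 1) l =
      T (-l) * Sq m (l + 1) + Sq m l + T (-(m : ℤ) + l - 1) * Sqt m (l - 1) := by
  have fin1 := finite_support_summand m
    (fun ν => T ((ν + (l - 1) - m) * (ν + (l - 1) - 1) + ν * (ν - m)))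
    (fun ν => qbinomZ ν (m - (l - 1) - ν))
  have fin2 := finite_support_summand m
    (fun μ => T ((μ + (l + 1) - m) * (μ + (l + 1)) + μ * (μ - m)))
    (fun μ => qbinomZ μ (m - (l + 1) - μ))
  have fin3 := finite_support_summand m
    (fun μ => T ((μ + l - m) * (μ + l) + μ * (μ - m))) (fun μ => qbinomZ μ (m - l - μ))
  have fin4 := finite_support_summand m
    (fun μ => T ((μ + l - m) * (μ + l) + μ * (μ - m))) (fun μ => qbinomZ (μ + 1) (m - l - μ))
  have shift := finsum_comp_equiv (Equiv.subRight (1 : ℤ)) (f := fun μ : ℤ =>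
    (T ((μ + l - m) * (μ + l) + μ * (μ - m)) : LaurentPolynomial ℤ) *
      (qbinomZ m μ * qbinomZ (μ + 1) (m - l - μ)))
  simp only [Equiv.subRight_apply] at shift
  unfold Sqt Sq
  rw [finsum_congr (summand_split m l), finsum_add_distrib, shift,
    finsum_congr (summand_shifted m l), finsum_add_distrib _ fin3, mul_finsum,
    mul_finsum, add_comm]
  · exact fin2.subset fun x hx h => hx (by simp only at h ⊢; rw [h, mul_zero])
  · exact fin1.subset fun x hx h => hx (by simp only at h ⊢; rw [h, mul_zero])
  · exact fin4.preimage (Equiv.subRight (1 : ℤ)).injective.injOn
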